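/- (Conditional π-λ theorem.) Let X be a stable set of functions on Ω and ℰ ⊆ P(X) a stable collection that is closed under finite conditional intersections. Then the stable σ-algebra generated by ℰ coincides with the stable Dynkin system generated by ℰ: Σ(ℰ) = 𝒟(ℰ). -/

import Mathlib

/-!
Common framework for conditional set theory and conditional measure theory
in the sense of Drapeau–Jamneshan–Karliczek–Kupper, specialized to the
measure algebra associated to a probability space `(Ω, F, P)`.

Functions on `Ω` are identified when they agree `P`-a.s., and measurable sets
are identified when their symmetric difference is a null set.  Conditional
subsets of a stable set `X` are represented by raw pairs `(V, A)` consisting of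
a set of functions and a (measurable) base set; all notions are formulated with
respect to the almost-sure identifications via the relations `cle` and `ceq`.
-/

open MeasureTheory Filter Set Topology
open scoped ENNReal

noncomputable section

namespace CondMT

variable {Ω E F' : Type*}

/-- A countable partition of `Ω` into measurable sets (modulo `P`-null sets). -/
structure Partition {Ω : Type*} (mΩ : MeasurableSpace Ω) (P : @Measure Ω mΩ) where
  part : ℕ → Set Ω
  meas : ∀ k, MeasurableSet[mΩ] (part k)
  disj : ∀ i j, i ≠ j → P (part i ∩ part j) = 0
  cover : P ((⋃ k, part k)ᶜ) = 0

variable {mΩ : MeasurableSpace Ω}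

open Classical in
/-- The concatenation `∑ x_k|A_k` of a sequence of functions along a partition:
the (a.s. unique) function equal to `x_k` on `A_k` for every `k`. -/
def Partition.concat {P : @Measure Ω mΩ} (A : Partition mΩ P) (x : ℕ → Ω → E) : Ω → E :=
  fun ω => if h : ∃ k, ω ∈ A.part k then x (Nat.find h) ω else x 0 ω

/-- A stable set of functions on `Ω`: nonempty, closed under a.s. modification and
closed under countable concatenations along partitions. -/
def Stable (P : @Measure Ω mΩ) (X : Set (Ω → E)) : Prop :=
  X.Nonempty ∧ (∀ x ∈ X, ∀ y, x =ᵐ[P] y → y ∈ X) ∧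
    ∀ (A : Partition mΩ P) (x : ℕ → Ω → E), (∀ k, x k ∈ X) → A.concat x ∈ X

/-- Raw data of a conditional subset `V|A`: the carrier `V` and the base set `A`. -/
abbrev CondRaw (Ω E : Type*) := Set (Ω → E) × Set Ω

/-- `S` represents a conditional subset of the stable set `X`: the carrier is a
stable subset of `X` and the base is measurable. -/
def IsCond (P : @Measure Ω mΩ) (X : Set (Ω → E)) (S : CondRaw Ω E) : Prop :=
  Stable P S.1 ∧ S.1 ⊆ X ∧ MeasurableSet[mΩ] S.2

/-- Conditional inclusion `V|A ⊑ W|B`: `A ⊆ B` a.s., and every `x|A`, `x ∈ V`,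
coincides a.s. on `A` with some `y|A`, `y ∈ W`. -/
def cle (P : @Measure Ω mΩ) (S T : CondRaw Ω E) : Prop :=
  P (S.2 \ T.2) = 0 ∧ ∀ x ∈ S.1, ∃ y ∈ T.1, ∀ᵐ ω ∂P, ω ∈ S.2 → x ω = y ω

/-- Identification of conditional subsets (equality in the conditional power set). -/
def ceq (P : @Measure Ω mΩ) (S T : CondRaw Ω E) : Prop := cle P S T ∧ cle P T S

/-- `x|C ∈ V|C`: the restriction of `x` to `C` agrees a.s. on `C` with an element of `V`. -/
def memOn (P : @Measure Ω mΩ) (C : Set Ω) (x : Ω → E) (V : Set (Ω → E)) : Prop :=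
  ∃ y ∈ V, ∀ᵐ ω ∂P, ω ∈ C → x ω = y ω

/-- `∑ V_k|A_k`, the set of concatenations of sequences taken from the `V_k`. -/
def concatSet (P : @Measure Ω mΩ) (A : Partition mΩ P) (V : ℕ → Set (Ω → E)) :
    Set (Ω → E) :=
  {f | ∃ x : ℕ → Ω → E, (∀ k, x k ∈ V k) ∧ f =ᵐ[P] A.concat x}

/-- Countable concatenation `∑ (V_k|B_k)|A_k := (∑ V_k|A_k)|⋃ (A_k ∩ B_k)` in the
conditional power set. -/
def condConcat (P : @Measure Ω mΩ) (A : Partition mΩ P) (S : ℕ → CondRaw Ω E) :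
    CondRaw Ω E :=
  (concatSet P A fun k => (S k).1, ⋃ k, A.part k ∩ (S k).2)

/-- Restriction `(V|A)|B := V|(A ∩ B)`. -/
def crestrict (S : CondRaw Ω E) (B : Set Ω) : CondRaw Ω E := (S.1, S.2 ∩ B)

/-- The degenerate conditional subset `X|∅ = {∗}`, the least element of `P(X)`. -/
def cbot (X : Set (Ω → E)) : CondRaw Ω E := (X, (∅ : Set Ω))

/-- The greatest element `X = X|Ω` of `P(X)`. -/
def ctop (X : Set (Ω → E)) : CondRaw Ω E := (X, (univ : Set Ω))

/-- `a` is a supremum (conditional union) of the family `s` in `(P(X), ⊑)`. -/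
def IsSupOf (P : @Measure Ω mΩ) (X : Set (Ω → E)) (s : Set (CondRaw Ω E))
    (a : CondRaw Ω E) : Prop :=
  IsCond P X a ∧ (∀ b ∈ s, cle P b a) ∧
    ∀ c, IsCond P X c → (∀ b ∈ s, cle P b c) → cle P a c

/-- `a` is an infimum (conditional intersection) of the family `s` in `(P(X), ⊑)`. -/
def IsInfOf (P : @Measure Ω mΩ) (X : Set (Ω → E)) (s : Set (CondRaw Ω E))
    (a : CondRaw Ω E) : Prop :=
  IsCond P X a ∧ (∀ b ∈ s, cle P a b) ∧
    ∀ c, IsCond P X c → (∀ b ∈ s, cle P c b) → cle P c a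

open Classical in
/-- The conditional union (supremum) of a family of conditional subsets. -/
def cSup (P : @Measure Ω mΩ) (X : Set (Ω → E)) (s : Set (CondRaw Ω E)) : CondRaw Ω E :=
  if h : ∃ a, IsSupOf P X s a then h.choose else ctop X

open Classical in
/-- The conditional intersection (infimum) of a family of conditional subsets. -/
def cInf (P : @Measure Ω mΩ) (X : Set (Ω → E)) (s : Set (CondRaw Ω E)) : CondRaw Ω E :=
  if h : ∃ a, IsInfOf P X s a then h.choose else ctop X

/-- Binary conditional union. -/
def cSup₂ (P : @Measure Ω mΩ) (X : Set (Ω → E)) (a b : CondRaw Ω E) : CondRaw Ω E :=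
  cSup P X {a, b}

/-- Binary conditional intersection. -/
def cInf₂ (P : @Measure Ω mΩ) (X : Set (Ω → E)) (a b : CondRaw Ω E) : CondRaw Ω E :=
  cInf P X {a, b}

/-- Conditional union of an indexed family. -/
def cSupFam (P : @Measure Ω mΩ) (X : Set (Ω → E)) {ι : Sort*}
    (S : ι → CondRaw Ω E) : CondRaw Ω E :=
  cSup P X (range S)

/-- Conditional intersection of an indexed family. -/
def cInfFam (P : @Measure Ω mΩ) (X : Set (Ω → E)) {ι : Sort*}
    (S : ι → CondRaw Ω E) : CondRaw Ω E :=
  cInf P X (range S)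

/-- Disjointness of conditional subsets: `V|A ⊓ W|B = {∗}`. -/
def cdisjoint (P : @Measure Ω mΩ) (X : Set (Ω → E)) (a b : CondRaw Ω E) : Prop :=
  ceq P (cInf₂ P X a b) (cbot X)

/-- The conditional complement `(V|A)^⊏ := ⊔ {W|B : W|B ⊓ V|A = {∗}}`. -/
def ccompl (P : @Measure Ω mΩ) (X : Set (Ω → E)) (a : CondRaw Ω E) : CondRaw Ω E :=
  cSup P X {b | IsCond P X b ∧ cdisjoint P X b a}

open Classical in
/-- The largest measurable set (mod null sets) satisfying a property `Φ`,
obtained by an exhaustion argument; junk value `∅` if there is none. -/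
def largestSet (P : @Measure Ω mΩ) (Φ : Set Ω → Prop) : Set Ω :=
  if h : ∃ C, MeasurableSet[mΩ] C ∧ Φ C ∧
      ∀ C', MeasurableSet[mΩ] C' → Φ C' → P (C' \ C) = 0
  then h.choose else ∅

open Classical in
/-- The smallest measurable set (mod null sets) satisfying a property `Φ`. -/
def smallestSet (P : @Measure Ω mΩ) (Φ : Set Ω → Prop) : Set Ω :=
  if h : ∃ C, MeasurableSet[mΩ] C ∧ Φ C ∧
      ∀ C', MeasurableSet[mΩ] C' → Φ C' → P (C \ C') = 0
  then h.choose else univ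

/-- Essential infimum `inf_i A_i` of a family of measurable sets in the measure algebra. -/
def essInfFam (P : @Measure Ω mΩ) {ι : Sort*} (A : ι → Set Ω) : Set Ω :=
  largestSet P fun C => ∀ i, P (C \ A i) = 0

/-- Essential supremum `sup_i A_i` of a family of measurable sets in the measure algebra. -/
def essSupFam (P : @Measure Ω mΩ) {ι : Sort*} (A : ι → Set Ω) : Set Ω :=
  smallestSet P fun C => ∀ i, P (A i \ C) = 0

/-- A stable collection: a nonempty, `ceq`-saturated family of conditional subsets of `X`
closed under countable concatenations. -/
def IsStableColl (P : @Measure Ω mΩ) (X : Set (Ω → E)) (𝒞 : Set (CondRaw Ω E)) : Prop :=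
  𝒞.Nonempty ∧ (∀ S ∈ 𝒞, IsCond P X S) ∧
    (∀ S ∈ 𝒞, ∀ T, IsCond P X T → ceq P S T → T ∈ 𝒞) ∧
    ∀ (A : Partition mΩ P) (S : ℕ → CondRaw Ω E), (∀ k, S k ∈ 𝒞) → condConcat P A S ∈ 𝒞

/-- A stable σ-algebra on `X`. -/
def IsStableSigma (P : @Measure Ω mΩ) (X : Set (Ω → E)) (𝒳 : Set (CondRaw Ω E)) : Prop :=
  IsStableColl P X 𝒳 ∧ ctop X ∈ 𝒳 ∧ (∀ S ∈ 𝒳, ccompl P X S ∈ 𝒳) ∧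
    ∀ S : ℕ → CondRaw Ω E, (∀ k, S k ∈ 𝒳) → cSupFam P X S ∈ 𝒳

/-- A stable Dynkin system on `X`. -/
def IsStableDynkin (P : @Measure Ω mΩ) (X : Set (Ω → E)) (𝒟 : Set (CondRaw Ω E)) : Prop :=
  IsStableColl P X 𝒟 ∧ ctop X ∈ 𝒟 ∧ (∀ S ∈ 𝒟, ccompl P X S ∈ 𝒟) ∧
    ∀ S : ℕ → CondRaw Ω E, (∀ k, S k ∈ 𝒟) →
      (∀ i j, i ≠ j → cdisjoint P X (S i) (S j)) → cSupFam P X S ∈ 𝒟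

/-- A stable ring on `X`. -/
def IsStableRing (P : @Measure Ω mΩ) (X : Set (Ω → E)) (𝒳 : Set (CondRaw Ω E)) : Prop :=
  IsStableColl P X 𝒳 ∧
    ∀ S ∈ 𝒳, ∀ T ∈ 𝒳, cInf₂ P X S (ccompl P X T) ∈ 𝒳 ∧ cSup₂ P X S T ∈ 𝒳

/-- The stable σ-algebra generated by a collection `ℰ`. -/
def sigmaGen (P : @Measure Ω mΩ) (X : Set (Ω → E)) (ℰ : Set (CondRaw Ω E)) :
    Set (CondRaw Ω E) :=
  ⋂₀ {𝒳 | IsStableSigma P X 𝒳 ∧ ℰ ⊆ 𝒳}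

/-- The stable Dynkin system generated by a collection `ℰ`. -/
def dynkinGen (P : @Measure Ω mΩ) (X : Set (Ω → E)) (ℰ : Set (CondRaw Ω E)) :
    Set (CondRaw Ω E) :=
  ⋂₀ {𝒟 | IsStableDynkin P X 𝒟 ∧ ℰ ⊆ 𝒟}

/-! ### Stable set functions and stable measures -/

/-- A stable set function `μ : 𝒞 → L̄⁰₊` (represented by measurable representatives,
well defined modulo identification, and commuting with countable concatenations). -/
def IsStableSetFun (P : @Measure Ω mΩ) (𝒞 : Set (CondRaw Ω E))
    (μ : CondRaw Ω E → Ω → ℝ≥0∞) : Prop :=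
  (∀ S ∈ 𝒞, Measurable[mΩ] (μ S)) ∧
    (∀ S ∈ 𝒞, ∀ T ∈ 𝒞, ceq P S T → μ S =ᵐ[P] μ T) ∧
    ∀ (A : Partition mΩ P) (S : ℕ → CondRaw Ω E), (∀ k, S k ∈ 𝒞) →
      μ (condConcat P A S) =ᵐ[P] A.concat fun k => μ (S k)

/-- Property (M1): `μ(V|A) = μ(V|A)|A + 0|Aᶜ`. -/
def M1 (P : @Measure Ω mΩ) (𝒞 : Set (CondRaw Ω E)) (μ : CondRaw Ω E → Ω → ℝ≥0∞) : Prop :=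
  ∀ S ∈ 𝒞, μ S =ᵐ[P] S.2.indicator (μ S)

/-- Property (M2): countable additivity on pairwise disjoint sequences whose
conditional union belongs to the domain. -/
def M2 (P : @Measure Ω mΩ) (X : Set (Ω → E)) (𝒳 : Set (CondRaw Ω E))
    (μ : CondRaw Ω E → Ω → ℝ≥0∞) : Prop :=
  ∀ S : ℕ → CondRaw Ω E, (∀ k, S k ∈ 𝒳) →
    (∀ i j, i ≠ j → cdisjoint P X (S i) (S j)) → cSupFam P X S ∈ 𝒳 →
    μ (cSupFam P X S) =ᵐ[P] fun ω => ∑' k, μ (S k) ω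

/-- Finite additivity: (M2) for finite pairwise disjoint families. -/
def FinAdd (P : @Measure Ω mΩ) (X : Set (Ω → E)) (𝒳 : Set (CondRaw Ω E))
    (μ : CondRaw Ω E → Ω → ℝ≥0∞) : Prop :=
  ∀ (n : ℕ) (S : Fin n → CondRaw Ω E), (∀ k, S k ∈ 𝒳) →
    (∀ i j, i ≠ j → cdisjoint P X (S i) (S j)) → cSupFam P X S ∈ 𝒳 →
    μ (cSupFam P X S) =ᵐ[P] fun ω => ∑ k, μ (S k) ω

/-- A stable measure (or stable pre-measure, when the domain is merely a stable
ring): a stable set function satisfying (M1) and (M2). -/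
def IsStableMeasureOn (P : @Measure Ω mΩ) (X : Set (Ω → E)) (𝒳 : Set (CondRaw Ω E))
    (μ : CondRaw Ω E → Ω → ℝ≥0∞) : Prop :=
  IsStableSetFun P 𝒳 μ ∧ M1 P 𝒳 μ ∧ M2 P X 𝒳 μ

/-- A finite stable measure. -/
def IsFiniteStableMeasureOn (P : @Measure Ω mΩ) (X : Set (Ω → E))
    (𝒳 : Set (CondRaw Ω E)) (μ : CondRaw Ω E → Ω → ℝ≥0∞) : Prop :=
  IsStableMeasureOn P X 𝒳 μ ∧ ∀ᵐ ω ∂P, μ (ctop X) ω < ∞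

/-- A stable probability measure. -/
def IsStableProbOn (P : @Measure Ω mΩ) (X : Set (Ω → E)) (𝒳 : Set (CondRaw Ω E))
    (μ : CondRaw Ω E → Ω → ℝ≥0∞) : Prop :=
  IsStableMeasureOn P X 𝒳 μ ∧ μ (ctop X) =ᵐ[P] fun _ => (1 : ℝ≥0∞)

/-- A stable outer measure on the conditional power set of `X`. -/
def IsStableOuter (P : @Measure Ω mΩ) (X : Set (Ω → E))
    (μ : CondRaw Ω E → Ω → ℝ≥0∞) : Prop :=
  (∀ S, IsCond P X S → Measurable[mΩ] (μ S)) ∧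
    (∀ S T, IsCond P X S → IsCond P X T → ceq P S T → μ S =ᵐ[P] μ T) ∧
    (∀ (A : Partition mΩ P) (S : ℕ → CondRaw Ω E), (∀ k, IsCond P X (S k)) →
      μ (condConcat P A S) =ᵐ[P] A.concat fun k => μ (S k)) ∧
    (∀ S, IsCond P X S → ∀ B, MeasurableSet[mΩ] B →
      μ (crestrict S B) =ᵐ[P] B.indicator (μ S)) ∧
    (∀ S T, IsCond P X S → IsCond P X T → cle P S T → ∀ᵐ ω ∂P, μ S ω ≤ μ T ω) ∧
    ∀ S : ℕ → CondRaw Ω E, (∀ k, IsCond P X (S k)) →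
      ∀ᵐ ω ∂P, μ (cSupFam P X S) ω ≤ ∑' k, μ (S k) ω

/-- Stable Carathéodory measurability with respect to a stable outer measure. -/
def CaraMeasurable (P : @Measure Ω mΩ) (X : Set (Ω → E))
    (μ : CondRaw Ω E → Ω → ℝ≥0∞) (S : CondRaw Ω E) : Prop :=
  ∀ T, IsCond P X T →
    (fun ω => μ (cInf₂ P X T S) ω + μ (cInf₂ P X T (ccompl P X S)) ω) =ᵐ[P] μ T

/-! ### Stable functions, the stable Borel σ-algebra on `L⁰`, and the integral -/

/-- The stable set `L⁰_m(E)` of all (classes of) measurable functions `Ω → E`. -/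
def l0m (P : @Measure Ω mΩ) (E : Type*) [MeasurableSpace E] : Set (Ω → E) :=
  {x | AEMeasurable x P}

/-- A stable function between stable sets of functions. -/
def StableFun (P : @Measure Ω mΩ) (X : Set (Ω → E)) (Y : Set (Ω → F'))
    (f : (Ω → E) → Ω → F') : Prop :=
  (∀ x ∈ X, f x ∈ Y) ∧ (∀ x ∈ X, ∀ y ∈ X, x =ᵐ[P] y → f x =ᵐ[P] f y) ∧
    ∀ (A : Partition mΩ P) (x : ℕ → Ω → E), (∀ k, x k ∈ X) →
      f (A.concat x) =ᵐ[P] A.concat fun k => f (x k)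

/-- The conditional preimage `f⁻¹(W|A)`. -/
def cPreimage (P : @Measure Ω mΩ) (X : Set (Ω → E)) (f : (Ω → E) → Ω → F')
    (W : CondRaw Ω F') : CondRaw Ω E :=
  ({x ∈ X | memOn P (largestSet P fun C => P (C \ W.2) = 0 ∧ ∃ x ∈ X, memOn P C (f x) W.1)
      (f x) W.1},
    largestSet P fun C => P (C \ W.2) = 0 ∧ ∃ x ∈ X, memOn P C (f x) W.1)

/-- The stable Borel σ-algebra `B(L⁰)` on `L⁰`, generated by the stable open balls. -/
def borelL0 (P : @Measure Ω mΩ) : Set (CondRaw Ω ℝ) :=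
  sigmaGen P (l0m P ℝ)
    {S | ∃ r ε : Ω → ℝ, AEMeasurable r P ∧ AEMeasurable ε P ∧ (∀ᵐ ω ∂P, 0 < ε ω) ∧
      ceq P S ({s | AEMeasurable s P ∧ ∀ᵐ ω ∂P, |s ω - r ω| < ε ω}, univ)}

/-- A stably measurable function `f : X → L⁰` with respect to a stable σ-algebra `𝒳`. -/
def StablyMeasurable (P : @Measure Ω mΩ) (X : Set (Ω → E)) (𝒳 : Set (CondRaw Ω E))
    (f : (Ω → E) → Ω → ℝ) : Prop :=
  StableFun P X (l0m P ℝ) f ∧ ∀ W ∈ borelL0 P, cPreimage P X f W ∈ 𝒳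

/-- The base set `A_x` of the stable indicator function of `S = V|A` at `x`. -/
def indBase (P : @Measure Ω mΩ) (S : CondRaw Ω E) (x : Ω → E) : Set Ω :=
  largestSet P fun C => P (C \ S.2) = 0 ∧ memOn P C x S.1

/-- The stable indicator function `1_{V|A} : X → L⁰`. -/
def cIndicator (P : @Measure Ω mΩ) (S : CondRaw Ω E) (x : Ω → E) : Ω → ℝ :=
  (indBase P S x).indicator fun _ => (1 : ℝ)

/-- Data of a stable elementary function: coefficients and conditional sets. -/
def ElemRep (Ω E : Type*) := Σ n : ℕ, (Fin n → Ω → ℝ) × (Fin n → CondRaw Ω E)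

/-- The function `∑_{k ≤ n} r_k 1_{V_k|A_k}` represented by `ρ`. -/
def repFun (P : @Measure Ω mΩ) (ρ : ElemRep Ω E) : (Ω → E) → Ω → ℝ :=
  fun x ω => ∑ k, ρ.2.1 k ω * cIndicator P (ρ.2.2 k) x ω

/-- The representation `ρ` is admissible: nonnegative `L⁰`-coefficients and a finite
pairwise disjoint family in `𝒳` whose conditional union is `X`. -/
def GoodRep (P : @Measure Ω mΩ) (X : Set (Ω → E)) (𝒳 : Set (CondRaw Ω E))
    (ρ : ElemRep Ω E) : Prop :=
  (∀ k, AEMeasurable (ρ.2.1 k) P) ∧ (∀ k, ∀ᵐ ω ∂P, 0 ≤ ρ.2.1 k ω) ∧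
    (∀ k, ρ.2.2 k ∈ 𝒳) ∧ (∀ i j, i ≠ j → cdisjoint P X (ρ.2.2 i) (ρ.2.2 j)) ∧
    ceq P (cSupFam P X ρ.2.2) (ctop X)

/-- A stable elementary function. -/
def IsElementary (P : @Measure Ω mΩ) (X : Set (Ω → E)) (𝒳 : Set (CondRaw Ω E))
    (f : (Ω → E) → Ω → ℝ) : Prop :=
  ∃ ρ : ElemRep Ω E, GoodRep P X 𝒳 ρ ∧ ∀ x ∈ X, f x =ᵐ[P] repFun P ρ x

/-- The stable Lebesgue integral `∑_k r_k μ(V_k|A_k)` of the elementary representation. -/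
def repInt (μ : CondRaw Ω E → Ω → ℝ≥0∞) (ρ : ElemRep Ω E) : Ω → ℝ≥0∞ :=
  fun ω => ∑ k, ENNReal.ofReal (ρ.2.1 k ω) * μ (ρ.2.2 k) ω

/-- The stable Lebesgue integral of a nonnegative function, as the supremum of the
integrals of the dominated stable elementary functions. -/
def cIntNN (P : @Measure Ω mΩ) (X : Set (Ω → E)) (𝒳 : Set (CondRaw Ω E))
    (μ : CondRaw Ω E → Ω → ℝ≥0∞) (f : (Ω → E) → Ω → ℝ) : Ω → ℝ≥0∞ :=
  fun ω =>
    ⨆ ρ : {ρ : ElemRep Ω E // GoodRep P X 𝒳 ρ ∧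
        ∀ x ∈ X, ∀ᵐ ω' ∂P, repFun P ρ x ω' ≤ f x ω'},
      repInt μ ρ.1 ω

/-- The positive part `f⁺` of an `L⁰`-valued function. -/
def fplus (f : (Ω → E) → Ω → ℝ) : (Ω → E) → Ω → ℝ := fun x ω => max (f x ω) 0

/-- The negative part `f⁻` of an `L⁰`-valued function. -/
def fminus (f : (Ω → E) → Ω → ℝ) : (Ω → E) → Ω → ℝ := fun x ω => max (-(f x ω)) 0

/-- Stable integrability of `f : X → L⁰`. -/
def CIntegrable (P : @Measure Ω mΩ) (X : Set (Ω → E)) (𝒳 : Set (CondRaw Ω E))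
    (μ : CondRaw Ω E → Ω → ℝ≥0∞) (f : (Ω → E) → Ω → ℝ) : Prop :=
  StablyMeasurable P X 𝒳 f ∧ (∀ᵐ ω ∂P, cIntNN P X 𝒳 μ (fplus f) ω < ∞) ∧
    ∀ᵐ ω ∂P, cIntNN P X 𝒳 μ (fminus f) ω < ∞

/-- The stable Lebesgue integral `∫_X f dμ := ∫ f⁺ dμ − ∫ f⁻ dμ`. -/
def cInt (P : @Measure Ω mΩ) (X : Set (Ω → E)) (𝒳 : Set (CondRaw Ω E))
    (μ : CondRaw Ω E → Ω → ℝ≥0∞) (f : (Ω → E) → Ω → ℝ) : Ω → ℝ :=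
  fun ω => (cIntNN P X 𝒳 μ (fplus f) ω).toReal - (cIntNN P X 𝒳 μ (fminus f) ω).toReal

/-! ### Products and sections -/

/-- The pairing `ω ↦ (x ω, y ω)`. -/
def pairFn (x : Ω → E) (y : Ω → F') : Ω → E × F' := fun ω => (x ω, y ω)

/-- The Cartesian product `X × Y` of two stable sets, as a stable set of functions
`Ω → E × F'`. -/
def prodSet (P : @Measure Ω mΩ) (X : Set (Ω → E)) (Y : Set (Ω → F')) :
    Set (Ω → E × F') :=
  {z | ∃ x ∈ X, ∃ y ∈ Y, z =ᵐ[P] pairFn x y}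

/-- The conditional rectangle `V|A × W|B := (V × W)|A ∩ B`. -/
def crect (P : @Measure Ω mΩ) (S : CondRaw Ω E) (T : CondRaw Ω F') :
    CondRaw Ω (E × F') :=
  (prodSet P S.1 T.1, S.2 ∩ T.2)

/-- The stable product σ-algebra `𝒳 ⊗ 𝒴`, generated by the conditional rectangles. -/
def prodSigma (P : @Measure Ω mΩ) (X : Set (Ω → E)) (Y : Set (Ω → F'))
    (𝒳 : Set (CondRaw Ω E)) (𝒴 : Set (CondRaw Ω F')) : Set (CondRaw Ω (E × F')) :=
  sigmaGen P (prodSet P X Y) {R | ∃ S ∈ 𝒳, ∃ T ∈ 𝒴, ceq P R (crect P S T)}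

/-- The conditional `x`-section `(Z|C)_x` of a conditional subset of `X × Y`. -/
def xsection (P : @Measure Ω mΩ) (Y : Set (Ω → F')) (Z : CondRaw Ω (E × F'))
    (x : Ω → E) : CondRaw Ω F' :=
  ({y ∈ Y | memOn P (largestSet P fun D => P (D \ Z.2) = 0 ∧ ∃ y ∈ Y, memOn P D (pairFn x y) Z.1)
      (pairFn x y) Z.1},
    largestSet P fun D => P (D \ Z.2) = 0 ∧ ∃ y ∈ Y, memOn P D (pairFn x y) Z.1)

/-- The conditional `y`-section `(Z|C)_y` of a conditional subset of `X × Y`. -/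
def ysection (P : @Measure Ω mΩ) (X : Set (Ω → E)) (Z : CondRaw Ω (E × F'))
    (y : Ω → F') : CondRaw Ω E :=
  ({x ∈ X | memOn P (largestSet P fun D => P (D \ Z.2) = 0 ∧ ∃ x ∈ X, memOn P D (pairFn x y) Z.1)
      (pairFn x y) Z.1},
    largestSet P fun D => P (D \ Z.2) = 0 ∧ ∃ x ∈ X, memOn P D (pairFn x y) Z.1)

/-! ### Conditional subsets of `L⁰_m(E)` associated to measurable sets -/

/-- `L⁰_m(F) = {x ∈ L⁰_m(E) : x ∈ F a.s.}` for a measurable `F ⊆ E`. -/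
def l0mF (P : @Measure Ω mΩ) {E : Type*} [MeasurableSpace E] (F : Set E) : Set (Ω → E) :=
  {x | AEMeasurable x P ∧ ∀ᵐ ω ∂P, x ω ∈ F}

/-- `∑ L⁰_m(F_k)|A_k = {x ∈ L⁰_m(E) : x ∈ F_k a.s. on A_k for all k}`. -/
def l0mConcat (P : @Measure Ω mΩ) {E : Type*} [MeasurableSpace E]
    (A : Partition mΩ P) (F : ℕ → Set E) : Set (Ω → E) :=
  {x | AEMeasurable x P ∧ ∀ k, ∀ᵐ ω ∂P, ω ∈ A.part k → x ω ∈ F k}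

/-- The stable ring `ℛ` on `L⁰_m(E)` generated by a measurable structure on `E`:
all conditional subsets of the form `(∑ L⁰_m(F_k)|A_k)|B`. -/
def ringR (P : @Measure Ω mΩ) (E : Type*) [MeasurableSpace E] : Set (CondRaw Ω E) :=
  {S | ∃ (F : ℕ → Set E) (A : Partition mΩ P) (B : Set Ω),
    (∀ k, MeasurableSet (F k)) ∧ MeasurableSet[mΩ] B ∧
      ceq P S (l0mConcat P A F, B)}

end CondMT

namespace CondMT

section aux

variable {Ω E : Type*} {mΩ : MeasurableSpace Ω} {P : @Measure Ω mΩ}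

lemma diff_null_iff {A B : Set Ω} : P (A \ B) = 0 ↔ ∀ᵐ ω ∂P, ω ∈ A → ω ∈ B := by
  rw [← ae_le_set]; rfl

lemma concat_ae (A : Partition mΩ P) (x : ℕ → Ω → E) :
    ∀ᵐ ω ∂P, ∀ k, ω ∈ A.part k → A.concat x ω = x k ω := by
  have h : ∀ᵐ ω ∂P, ∀ i j, i ≠ j → ω ∉ A.part i ∩ A.part j := by
    rw [ae_all_iff]; intro i
    rw [ae_all_iff]; intro j
    by_cases hij : i = j
    · simp [hij]
    · have := measure_eq_zero_iff_ae_notMem.1 (A.disj i j hij)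
      filter_upwards [this] with ω h _ using h
  filter_upwards [h] with ω h k hk
  have hex : ∃ k, ω ∈ A.part k := ⟨k, hk⟩
  unfold Partition.concat
  rw [dif_pos hex]
  classical
  have h2 : Nat.find hex = k := by
    by_contra hne
    exact h _ _ hne ⟨Nat.find_spec hex, hk⟩
  rw [← h2]

lemma cover_ae (A : Partition mΩ P) : ∀ᵐ ω ∂P, ∃ k, ω ∈ A.part k := by
  have := measure_eq_zero_iff_ae_notMem.1 A.cover
  filter_upwards [this] with ω h
  simpa using h

lemma disj_ae (A : Partition mΩ P) : ∀ᵐ ω ∂P, ∀ i j, ω ∈ A.part i → ω ∈ A.part j → i = j := by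
  rw [ae_all_iff]; intro i
  rw [ae_all_iff]; intro j
  by_cases hij : i = j
  · simp [hij]
  · have := measure_eq_zero_iff_ae_notMem.1 (A.disj i j hij)
    filter_upwards [this] with ω h h1 h2 using (h ⟨h1, h2⟩).elim

/-- the partition `Cᶜ, D_0, D_1, ...` with `D` the disjointed sequence. -/
def djPart (P : @Measure Ω mΩ) (C : ℕ → Set Ω) (hC : ∀ k, MeasurableSet[mΩ] (C k)) :
    Partition mΩ P where
  part := fun n => Nat.casesOn n (⋃ k, C k)ᶜ (fun k => disjointed C k)
  meas := by
    intro k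
    cases k with
    | zero => exact (MeasurableSet.iUnion hC).compl
    | succ k => exact MeasurableSet.disjointed hC k
  disj := by
    have key : ∀ j, disjointed C j ⊆ ⋃ k, C k := fun j =>
      (disjointed_subset C j).trans (subset_iUnion C j)
    intro i j hij
    have : Disjoint (Nat.casesOn i (⋃ k, C k)ᶜ (fun k => disjointed C k) : Set Ω)
        (Nat.casesOn j (⋃ k, C k)ᶜ (fun k => disjointed C k) : Set Ω) := by
      cases i with
      | zero =>
        cases j with
        | zero => exact (hij rfl).elim
        | succ j => exact disjoint_compl_left.mono_right (key j)
      | succ i =>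
        cases j with
        | zero => exact disjoint_compl_right.mono_left (key i)
        | succ j => exact disjoint_disjointed C (by omega)
    rw [Set.disjoint_iff_inter_eq_empty.1 this]
    exact measure_empty
  cover := by
    have : (⋃ n : ℕ, (Nat.casesOn n (⋃ k, C k)ᶜ (fun k => disjointed C k) : Set Ω)) = univ := by
      rw [eq_univ_iff_forall]
      intro ω
      by_cases h : ω ∈ ⋃ k, C k
      · rw [← iUnion_disjointed] at h
        obtain ⟨k, hk⟩ := mem_iUnion.1 h
        exact mem_iUnion.2 ⟨k + 1, hk⟩
      · exact mem_iUnion.2 ⟨0, h⟩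
    rw [this]; simp

/-- gluing: a function in `V` equal to `x k` on the `k`-th disjointed piece -/
lemma glue {V : Set (Ω → E)} (hV : Stable P V) (C : ℕ → Set Ω)
    (hC : ∀ k, MeasurableSet[mΩ] (C k)) (x : ℕ → Ω → E) (hx : ∀ k, x k ∈ V) (x' : Ω → E)
    (hx' : x' ∈ V) :
    ∃ y ∈ V, ∀ᵐ ω ∂P, (∀ k, ω ∈ disjointed C k → y ω = x k ω) ∧
      ((∀ k, ω ∉ C k) → y ω = x' ω) := by
  refine ⟨(djPart P C hC).concat (fun n => Nat.casesOn n x' x), hV.2.2 _ _ ?_, ?_⟩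
  · intro k; cases k with
    | zero => exact hx'
    | succ k => exact hx k
  · filter_upwards [concat_ae (djPart P C hC) (fun n => Nat.casesOn n x' x)] with ω h
    refine ⟨fun k hk => h (k + 1) hk, fun h' => h 0 ?_⟩
    change ω ∈ (⋃ k, C k)ᶜ
    simpa using h'

lemma mem_disjointed_of_iUnion {C : ℕ → Set Ω} {ω : Ω} (h : ω ∈ ⋃ k, C k) :
    ∃ k, ω ∈ disjointed C k ∧ ω ∈ C k := by
  rw [← iUnion_disjointed] at h
  obtain ⟨k, hk⟩ := mem_iUnion.1 h
  exact ⟨k, hk, disjointed_subset C k hk⟩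

lemma exists_largest [IsProbabilityMeasure P] (Φ : Set Ω → Prop) (h0 : Φ ∅)
    (hU : ∀ C : ℕ → Set Ω, (∀ k, MeasurableSet[mΩ] (C k)) → (∀ k, Φ (C k)) → Φ (⋃ k, C k)) :
    ∃ C, MeasurableSet[mΩ] C ∧ Φ C ∧ ∀ C', MeasurableSet[mΩ] C' → Φ C' → P (C' \ C) = 0 := by
  let s : Set ℝ≥0∞ := P '' {C | MeasurableSet[mΩ] C ∧ Φ C}
  have hs : s.Nonempty := ⟨_, ∅, ⟨MeasurableSet.empty, h0⟩, rfl⟩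
  obtain ⟨u, -, hu, hmem⟩ := exists_seq_tendsto_sSup hs (OrderTop.bddAbove s)
  choose C hC hCu using hmem
  refine ⟨⋃ k, C k, MeasurableSet.iUnion fun k => (hC k).1,
    hU C (fun k => (hC k).1) (fun k => (hC k).2), ?_⟩
  intro C' hC' hΦ'
  have hle : sSup s ≤ P (⋃ k, C k) := by
    refine le_of_tendsto' hu fun k => ?_
    rw [← hCu k]
    exact measure_mono (subset_iUnion C k)
  have hmU : MeasurableSet[mΩ] (⋃ k, C k) := MeasurableSet.iUnion fun k => (hC k).1
  let D : ℕ → Set Ω := fun n => Nat.casesOn n C' C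
  have hD : (⋃ n, D n) = C' ∪ ⋃ k, C k := by
    ext ω
    simp only [mem_iUnion, mem_union]
    constructor
    · rintro ⟨n, hn⟩
      cases n with
      | zero => exact Or.inl hn
      | succ n => exact Or.inr ⟨n, hn⟩
    · rintro (h | ⟨n, hn⟩)
      · exact ⟨0, h⟩
      · exact ⟨n + 1, hn⟩
  have hDm : ∀ n, MeasurableSet[mΩ] (D n) := by
    intro n; cases n with
    | zero => exact hC'
    | succ n => exact (hC n).1
  have hDΦ : ∀ n, Φ (D n) := by
    intro n; cases n with
    | zero => exact hΦ'
    | succ n => exact (hC n).2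
  have h1 : P (C' ∪ ⋃ k, C k) ≤ sSup s := by
    refine le_sSup ⟨_, ⟨?_, ?_⟩, rfl⟩
    · exact hC'.union hmU
    · rw [← hD]; exact hU D hDm hDΦ
  have h2 : P (C' \ ⋃ k, C k) + P (⋃ k, C k) = P (C' ∪ ⋃ k, C k) := by
    rw [add_comm, union_comm]; exact measure_add_diff hmU.nullMeasurableSet C'
  have h3 : P (C' \ ⋃ k, C k) + P (⋃ k, C k) ≤ 0 + P (⋃ k, C k) := by
    rw [h2, zero_add]; exact h1.trans hle
  exact le_antisymm ((ENNReal.add_le_add_iff_right (measure_ne_top P _)).1 h3) zero_le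

variable [IsProbabilityMeasure P] {X : Set (Ω → E)}

lemma indBase_spec {S : CondRaw Ω E} (hS : IsCond P X S) (x : Ω → E) :
    MeasurableSet[mΩ] (indBase P S x) ∧ (∀ᵐ ω ∂P, ω ∈ indBase P S x → ω ∈ S.2) ∧
      memOn P (indBase P S x) x S.1 ∧
      ∀ C, MeasurableSet[mΩ] C → (∀ᵐ ω ∂P, ω ∈ C → ω ∈ S.2) → memOn P C x S.1 →
        ∀ᵐ ω ∂P, ω ∈ C → ω ∈ indBase P S x := by
  have hex : ∃ C, MeasurableSet[mΩ] C ∧ (P (C \ S.2) = 0 ∧ memOn P C x S.1) ∧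
      ∀ C', MeasurableSet[mΩ] C' → (P (C' \ S.2) = 0 ∧ memOn P C' x S.1) → P (C' \ C) = 0 := by
    refine exists_largest (fun C => P (C \ S.2) = 0 ∧ memOn P C x S.1) ?_ ?_
    · obtain ⟨y, hy⟩ := hS.1.1
      exact ⟨by simp, y, hy, by simp⟩
    · intro C hC h
      choose h1 y hy hxy using h
      obtain ⟨z, hz, hzy⟩ := glue hS.1 C hC y hy (y 0) (hy 0)
      refine ⟨?_, z, hz, ?_⟩
      · rw [iUnion_diff]; exact measure_iUnion_null h1
      · filter_upwards [hzy, ae_all_iff.2 hxy] with ω h1 h2 h3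
        obtain ⟨k, hk, hk'⟩ := mem_disjointed_of_iUnion h3
        rw [h1.1 k hk, h2 k hk']
  have hdef : indBase P S x = hex.choose := by
    unfold indBase largestSet
    rw [dif_pos hex]
  have hsp := hex.choose_spec
  rw [← hdef] at hsp
  refine ⟨hsp.1, diff_null_iff.1 hsp.2.1.1, hsp.2.1.2, fun C hC h1 h2 => ?_⟩
  exact diff_null_iff.1 (hsp.2.2 C hC ⟨diff_null_iff.2 h1, h2⟩)

lemma cle_iff {S T : CondRaw Ω E} (hS : IsCond P X S) (hT : IsCond P X T) :
    cle P S T ↔ ∀ x ∈ X, ∀ᵐ ω ∂P, ω ∈ indBase P S x → ω ∈ indBase P T x := by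
  constructor
  · rintro ⟨h1, h2⟩ x hx
    rw [diff_null_iff] at h1
    obtain ⟨a1, a2, ⟨y, hy, hxy⟩, -⟩ := indBase_spec hS x
    obtain ⟨z, hz, hyz⟩ := h2 y hy
    refine (indBase_spec hT x).2.2.2 _ a1 ?_ ⟨z, hz, ?_⟩
    · filter_upwards [h1, a2] with ω b1 b2 b3 using b1 (b2 b3)
    · filter_upwards [hxy, hyz, a2] with ω b1 b2 b3 b4
      rw [b1 b4, b2 (b3 b4)]
  · intro h
    have key : ∀ x ∈ S.1, ∀ᵐ ω ∂P, ω ∈ S.2 → ω ∈ indBase P T x := by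
      intro x hx
      have := (indBase_spec hS x).2.2.2 S.2 hS.2.2 (by simp) ⟨x, hx, by simp⟩
      filter_upwards [this, h x (hS.2.1 hx)] with ω b1 b2 b3 using b2 (b1 b3)
    constructor
    · obtain ⟨x, hx⟩ := hS.1.1
      rw [diff_null_iff]
      filter_upwards [key x hx, (indBase_spec hT x).2.1] with ω b1 b2 b3 using b2 (b1 b3)
    · intro x hx
      obtain ⟨y, hy, hxy⟩ := (indBase_spec hT x).2.2.1
      refine ⟨y, hy, ?_⟩
      filter_upwards [key x hx, hxy] with ω b1 b2 b3 using b2 (b1 b3)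

lemma indBase_ext {S : CondRaw Ω E} (hS : IsCond P X S) (x y : Ω → E) (C : Set Ω)
    (hC : MeasurableSet[mΩ] C) (hxy : ∀ᵐ ω ∂P, ω ∈ C → x ω = y ω) :
    ∀ᵐ ω ∂P, ω ∈ C → ω ∈ indBase P S x → ω ∈ indBase P S y := by
  obtain ⟨a1, a2, ⟨z, hz, hxz⟩, -⟩ := indBase_spec hS x
  have := (indBase_spec hS y).2.2.2 (indBase P S x ∩ C) (a1.inter hC) ?_ ⟨z, hz, ?_⟩
  · filter_upwards [this] with ω b1 b2 b3 using b1 ⟨b3, b2⟩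
  · filter_upwards [a2] with ω b1 b2 using b1 b2.1
  · filter_upwards [hxz, hxy] with ω b1 b2 b3
    rw [← b2 b3.2, b1 b3.1]

/-- measurable extensional functions `X → F` -/
def ExtFun (P : @Measure Ω mΩ) (X : Set (Ω → E)) (f : (Ω → E) → Set Ω) : Prop :=
  (∀ x ∈ X, MeasurableSet[mΩ] (f x)) ∧ ∀ x ∈ X, ∀ y ∈ X, ∀ C, MeasurableSet[mΩ] C →
    (∀ᵐ ω ∂P, ω ∈ C → x ω = y ω) → ∀ᵐ ω ∂P, ω ∈ C → ω ∈ f x → ω ∈ f y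

/-- `S` is represented by `f`. -/
def Rp (P : @Measure Ω mΩ) (X : Set (Ω → E)) (S : CondRaw Ω E) (f : (Ω → E) → Set Ω) : Prop :=
  IsCond P X S ∧ ∀ x ∈ X, ∀ᵐ ω ∂P, ω ∈ indBase P S x ↔ ω ∈ f x

lemma extFun_indBase {S : CondRaw Ω E} (hS : IsCond P X S) : ExtFun P X (indBase P S) :=
  ⟨fun x _ => (indBase_spec hS x).1, fun x _ y _ C hC h => indBase_ext hS x y C hC h⟩

lemma rp_self {S : CondRaw Ω E} (hS : IsCond P X S) : Rp P X S (indBase P S) :=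
  ⟨hS, fun x _ => by simp⟩

lemma realize (hX : Stable P X) {f : (Ω → E) → Set Ω} (hf : ExtFun P X f) :
    ∃ S, Rp P X S f := by
  obtain ⟨hm, hext⟩ := hf
  obtain ⟨C₀, hC₀, ⟨x₀, hx₀, hx₀'⟩, hmax⟩ := exists_largest (P := P)
    (fun C => ∃ x ∈ X, ∀ᵐ ω ∂P, ω ∈ C → ω ∈ f x)
    (by obtain ⟨x, hx⟩ := hX.1; exact ⟨x, hx, by simp⟩)
    (by
      intro C hC h
      choose x hx hCx using h
      obtain ⟨y, hy, hyx⟩ := glue hX C hC x hx (x 0) (hx 0)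
      refine ⟨y, hy, ?_⟩
      have h1 : ∀ k, ∀ᵐ ω ∂P, ω ∈ disjointed C k → ω ∈ f (x k) → ω ∈ f y := by
        intro k
        refine hext _ (hx k) _ hy _ (MeasurableSet.disjointed hC k) ?_
        filter_upwards [hyx] with ω b1 b2 using (b1.1 k b2).symm
      filter_upwards [ae_all_iff.2 h1, ae_all_iff.2 hCx] with ω b1 b2 b3
      obtain ⟨k, hk, hk'⟩ := mem_disjointed_of_iUnion b3
      exact b1 k hk (b2 k hk'))
  have hcond : IsCond P X ({x | x ∈ X ∧ ∀ᵐ ω ∂P, ω ∈ C₀ → ω ∈ f x}, C₀) := by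
    refine ⟨⟨⟨x₀, hx₀, hx₀'⟩, ?_, ?_⟩, fun x hx => hx.1, hC₀⟩
    · rintro x ⟨hx, hx'⟩ y hxy
      have hy := hX.2.1 x hx y hxy
      refine ⟨hy, ?_⟩
      have := hext x hx y hy univ MeasurableSet.univ (by filter_upwards [hxy] with ω b _ using b)
      filter_upwards [this, hx'] with ω b1 b2 b3 using b1 (mem_univ _) (b2 b3)
    · intro A x hx
      have hy := hX.2.2 A x (fun k => (hx k).1)
      refine ⟨hy, ?_⟩
      have h1 : ∀ k, ∀ᵐ ω ∂P, ω ∈ A.part k → ω ∈ f (x k) → ω ∈ f (A.concat x) := by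
        intro k
        refine hext _ (hx k).1 _ hy _ (A.meas k) ?_
        filter_upwards [concat_ae A x] with ω b1 b2 using (b1 k b2).symm
      filter_upwards [ae_all_iff.2 h1, ae_all_iff.2 (fun k => (hx k).2), cover_ae A]
        with ω b1 b2 b3 b4
      obtain ⟨k, hk⟩ := b3
      exact b1 k hk (b2 k b4)
  refine ⟨_, hcond, ?_⟩
  intro x hx
  obtain ⟨a1, a2, ⟨y, hy, hxy⟩, a3⟩ := indBase_spec hcond x
  have hle : ∀ᵐ ω ∂P, ω ∈ f x → ω ∈ C₀ :=
    diff_null_iff.1 (hmax (f x) (hm x hx) ⟨x, hx, by simp⟩)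
  have h1 := a3 (f x) (hm x hx) hle (by
    obtain ⟨z, hz, hzx⟩ := glue hX (fun _ => f x) (fun _ => hm x hx) (fun _ => x)
      (fun _ => hx) x₀ hx₀
    have e1 : ∀ᵐ ω ∂P, ω ∈ f x → z ω = x ω := by
      filter_upwards [hzx] with ω b1 b2
      obtain ⟨k, hk, -⟩ := mem_disjointed_of_iUnion (C := fun _ : ℕ => f x) (ω := ω)
        (mem_iUnion.2 ⟨0, b2⟩)
      exact b1.1 k hk
    have e2 : ∀ᵐ ω ∂P, ω ∈ (f x)ᶜ → z ω = x₀ ω := by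
      filter_upwards [hzx] with ω b1 b2 using b1.2 (fun _ => b2)
    refine ⟨z, ⟨hz, ?_⟩, ?_⟩
    · have g1 := hext x hx z hz (f x) (hm x hx) (by
        filter_upwards [e1] with ω b1 b2 using (b1 b2).symm)
      have g2 := hext x₀ hx₀ z hz (f x)ᶜ (hm x hx).compl (by
        filter_upwards [e2] with ω b1 b2 using (b1 b2).symm)
      filter_upwards [g1, g2, hx₀'] with ω b1 b2 b3 b4
      by_cases h : ω ∈ f x
      · exact b1 h h
      · exact b2 h (b3 b4)
    · filter_upwards [e1] with ω b1 b2 using (b1 b2).symm)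
  have h2 := hext y hy.1 x hx _ a1 (by
    filter_upwards [hxy] with ω b1 b2 using (b1 b2).symm)
  filter_upwards [h1, h2, a2, hy.2] with ω b1 b2 b3 b4
  exact ⟨fun h => b2 h (b4 (b3 h)), b1⟩

lemma Rp.cle_iff {S T : CondRaw Ω E} {f g : (Ω → E) → Set Ω} (hS : Rp P X S f)
    (hT : Rp P X T g) : cle P S T ↔ ∀ x ∈ X, ∀ᵐ ω ∂P, ω ∈ f x → ω ∈ g x := by
  rw [CondMT.cle_iff hS.1 hT.1]
  refine forall₂_congr fun x hx => ?_
  constructor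
  · intro h
    filter_upwards [h, hS.2 x hx, hT.2 x hx] with ω b1 b2 b3 b4 using b3.1 (b1 (b2.2 b4))
  · intro h
    filter_upwards [h, hS.2 x hx, hT.2 x hx] with ω b1 b2 b3 b4 using b3.2 (b1 (b2.1 b4))

lemma Rp.ceq_iff {S T : CondRaw Ω E} {f g : (Ω → E) → Set Ω} (hS : Rp P X S f)
    (hT : Rp P X T g) : ceq P S T ↔ ∀ x ∈ X, ∀ᵐ ω ∂P, ω ∈ f x ↔ ω ∈ g x := by
  unfold ceq
  rw [hS.cle_iff hT, hT.cle_iff hS]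
  constructor
  · rintro ⟨h1, h2⟩ x hx
    filter_upwards [h1 x hx, h2 x hx] with ω b1 b2 using ⟨b1, b2⟩
  · intro h
    exact ⟨fun x hx => (h x hx).mono fun ω b => b.1, fun x hx => (h x hx).mono fun ω b => b.2⟩

lemma Rp.congr {S : CondRaw Ω E} {f g : (Ω → E) → Set Ω} (hS : Rp P X S f)
    (h : ∀ x ∈ X, ∀ᵐ ω ∂P, ω ∈ f x ↔ ω ∈ g x) : Rp P X S g :=
  ⟨hS.1, fun x hx => by
    filter_upwards [hS.2 x hx, h x hx] with ω b1 b2 using b1.trans b2⟩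

lemma Rp.of_ceq {S T : CondRaw Ω E} {f : (Ω → E) → Set Ω} (hS : Rp P X S f)
    (hT : IsCond P X T) (h : ceq P T S) : Rp P X T f :=
  ⟨hT, ((rp_self hT).ceq_iff hS).1 h⟩

lemma IsInfOf.rp {s : Set (CondRaw Ω E)} {a : CondRaw Ω E} {f : (Ω → E) → Set Ω}
    (ha : IsInfOf P X s a) (hR : Rp P X a f) : Rp P X (cInf P X s) f := by
  have hex : ∃ a, IsInfOf P X s a := ⟨a, ha⟩
  have hdef : cInf P X s = hex.choose := by
    unfold cInf; rw [dif_pos hex]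
  have hsp := hex.choose_spec
  rw [← hdef] at hsp
  exact hR.of_ceq hsp.1 ⟨ha.2.2 _ hsp.1 hsp.2.1, hsp.2.2 _ ha.1 ha.2.1⟩

lemma IsSupOf.rp {s : Set (CondRaw Ω E)} {a : CondRaw Ω E} {f : (Ω → E) → Set Ω}
    (ha : IsSupOf P X s a) (hR : Rp P X a f) : Rp P X (cSup P X s) f := by
  have hex : ∃ a, IsSupOf P X s a := ⟨a, ha⟩
  have hdef : cSup P X s = hex.choose := by
    unfold cSup; rw [dif_pos hex]
  have hsp := hex.choose_spec
  rw [← hdef] at hsp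
  exact hR.of_ceq hsp.1 ⟨hsp.2.2 _ ha.1 ha.2.1, ha.2.2 _ hsp.1 hsp.2.1⟩

lemma rp_inf₀ (hX : Stable P X) {S T : CondRaw Ω E} (hS : IsCond P X S) (hT : IsCond P X T) :
    Rp P X (cInf₂ P X S T) (fun x => indBase P S x ∩ indBase P T x) := by
  have eS := extFun_indBase hS
  have eT := extFun_indBase hT
  obtain ⟨a, ha⟩ := realize hX (f := fun x => indBase P S x ∩ indBase P T x)
    ⟨fun x hx => (eS.1 x hx).inter (eT.1 x hx), fun x hx y hy C hC h => by
      filter_upwards [eS.2 x hx y hy C hC h, eT.2 x hx y hy C hC h] with ω b1 b2 b3 b4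
        using ⟨b1 b3 b4.1, b2 b3 b4.2⟩⟩
  refine IsInfOf.rp (a := a) ⟨ha.1, ?_, ?_⟩ ha
  · rintro b (rfl | rfl)
    · rw [ha.cle_iff (rp_self hS)]
      exact fun x hx => ae_of_all _ fun ω h => h.1
    · rw [ha.cle_iff (rp_self hT)]
      exact fun x hx => ae_of_all _ fun ω h => h.2
  · intro c hc h
    rw [(rp_self hc).cle_iff ha]
    intro x hx
    have h1 := (CondMT.cle_iff hc hS).1 (h S (by simp)) x hx
    have h2 := (CondMT.cle_iff hc hT).1 (h T (by simp)) x hx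
    filter_upwards [h1, h2] with ω b1 b2 b3 using ⟨b1 b3, b2 b3⟩

lemma rp_inf (hX : Stable P X) {S T : CondRaw Ω E} {f g : (Ω → E) → Set Ω}
    (hS : Rp P X S f) (hT : Rp P X T g) : Rp P X (cInf₂ P X S T) (fun x => f x ∩ g x) :=
  (rp_inf₀ hX hS.1 hT.1).congr fun x hx => by
    filter_upwards [hS.2 x hx, hT.2 x hx] with ω b1 b2 using and_congr b1 b2

lemma rp_sup₀ (hX : Stable P X) {S : ℕ → CondRaw Ω E} (hS : ∀ k, IsCond P X (S k)) :
    Rp P X (cSupFam P X S) (fun x => ⋃ k, indBase P (S k) x) := by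
  have eS := fun k => extFun_indBase (hS k)
  obtain ⟨a, ha⟩ := realize hX (f := fun x => ⋃ k, indBase P (S k) x)
    ⟨fun x hx => MeasurableSet.iUnion fun k => (eS k).1 x hx, fun x hx y hy C hC h => by
      filter_upwards [ae_all_iff.2 fun k => (eS k).2 x hx y hy C hC h] with ω b1 b2 b3
      obtain ⟨k, hk⟩ := mem_iUnion.1 b3
      exact mem_iUnion.2 ⟨k, b1 k b2 hk⟩⟩
  refine IsSupOf.rp (a := a) ⟨ha.1, ?_, ?_⟩ ha
  · rintro b ⟨k, rfl⟩
    rw [(rp_self (hS k)).cle_iff ha]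
    exact fun x hx => ae_of_all _ fun ω h => mem_iUnion.2 ⟨k, h⟩
  · intro c hc h
    rw [ha.cle_iff (rp_self hc)]
    intro x hx
    have h1 := fun k => (CondMT.cle_iff (hS k) hc).1 (h (S k) ⟨k, rfl⟩) x hx
    filter_upwards [ae_all_iff.2 h1] with ω b1 b2
    obtain ⟨k, hk⟩ := mem_iUnion.1 b2
    exact b1 k hk

lemma rp_sup (hX : Stable P X) {S : ℕ → CondRaw Ω E} {f : ℕ → (Ω → E) → Set Ω}
    (hS : ∀ k, Rp P X (S k) (f k)) : Rp P X (cSupFam P X S) (fun x => ⋃ k, f k x) :=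
  (rp_sup₀ hX fun k => (hS k).1).congr fun x hx => by
    filter_upwards [ae_all_iff.2 fun k => (hS k).2 x hx] with ω b1
    simp only [mem_iUnion]
    exact exists_congr b1

lemma rp_bot (hX : Stable P X) : Rp P X (cbot X) (fun _ => ∅) := by
  have hc : IsCond P X (cbot X) := ⟨hX, Subset.rfl, MeasurableSet.empty⟩
  refine ⟨hc, fun x hx => ?_⟩
  filter_upwards [(indBase_spec hc x).2.1] with ω b
  exact ⟨b, fun h => h.elim⟩

lemma rp_top (hX : Stable P X) : Rp P X (ctop X) (fun _ => univ) := by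
  have hc : IsCond P X (ctop X) := ⟨hX, Subset.rfl, MeasurableSet.univ⟩
  refine ⟨hc, fun x hx => ?_⟩
  filter_upwards [(indBase_spec hc x).2.2.2 univ MeasurableSet.univ
    (ae_of_all _ fun ω h => h) ⟨x, hx, by simp⟩] with ω b
  exact ⟨fun _ => mem_univ _, b⟩

lemma disjoint_iff (hX : Stable P X) {S T : CondRaw Ω E} {f g : (Ω → E) → Set Ω}
    (hS : Rp P X S f) (hT : Rp P X T g) :
    cdisjoint P X S T ↔ ∀ x ∈ X, ∀ᵐ ω ∂P, ω ∈ f x → ω ∉ g x := by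
  unfold cdisjoint
  rw [(rp_inf hX hS hT).ceq_iff (rp_bot hX)]
  simp

lemma rp_compl₀ (hX : Stable P X) {S : CondRaw Ω E} (hS : IsCond P X S) :
    Rp P X (ccompl P X S) (fun x => (indBase P S x)ᶜ) := by
  have eS := extFun_indBase hS
  obtain ⟨a, ha⟩ := realize hX (f := fun x => (indBase P S x)ᶜ)
    ⟨fun x hx => (eS.1 x hx).compl, fun x hx y hy C hC h => by
      filter_upwards [eS.2 y hy x hx C hC (h.mono fun ω b c => (b c).symm)] with ω b1 b2 b3 b4
        using b3 (b1 b2 b4)⟩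
  refine IsSupOf.rp (a := a) ⟨ha.1, ?_, ?_⟩ ha
  · rintro b ⟨hb, hd⟩
    rw [(rp_self hb).cle_iff ha]
    exact (disjoint_iff hX (rp_self hb) (rp_self hS)).1 hd
  · intro c hc h
    refine h a ⟨ha.1, ?_⟩
    rw [disjoint_iff hX ha (rp_self hS)]
    exact fun x hx => ae_of_all _ fun ω h => h

lemma rp_compl (hX : Stable P X) {S : CondRaw Ω E} {f : (Ω → E) → Set Ω}
    (hS : Rp P X S f) : Rp P X (ccompl P X S) (fun x => (f x)ᶜ) :=
  (rp_compl₀ hX hS.1).congr fun x hx => by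
    filter_upwards [hS.2 x hx] with ω b1 using not_congr b1

lemma isCond_concat (hX : Stable P X) (A : Partition mΩ P) {S : ℕ → CondRaw Ω E}
    (hS : ∀ k, IsCond P X (S k)) : IsCond P X (condConcat P A S) := by
  refine ⟨⟨?_, ?_, ?_⟩, ?_, ?_⟩
  · choose x hx using fun k => (hS k).1.1
    exact ⟨A.concat x, x, hx, EventuallyEq.rfl⟩
  · rintro x ⟨u, hu, hxu⟩ y hxy
    exact ⟨u, hu, hxy.symm.trans hxu⟩
  · intro A' f hf
    choose u hu hfu using hf
    refine ⟨fun k => A'.concat fun j => u j k, fun k => (hS k).1.2.2 _ _ fun j => hu j k, ?_⟩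
    filter_upwards [concat_ae A' f, ae_all_iff.2 hfu, ae_all_iff.2 fun j => concat_ae A (u j),
      ae_all_iff.2 fun k => concat_ae A' fun j => u j k,
      concat_ae A fun k => A'.concat fun j => u j k, cover_ae A, cover_ae A']
      with ω b1 b2 b3 b4 b5 ⟨k, hk⟩ ⟨j, hj⟩
    rw [b1 j hj, b2 j, b3 j k hk, b5 k hk, b4 k j hj]
  · rintro f ⟨u, hu, hfu⟩
    exact hX.2.1 _ (hX.2.2 A u fun k => (hS k).2.1 (hu k)) _ hfu.symm
  · exact MeasurableSet.iUnion fun k => (A.meas k).inter (hS k).2.2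

lemma rp_concat (hX : Stable P X) (A : Partition mΩ P) {S : ℕ → CondRaw Ω E}
    {f : ℕ → (Ω → E) → Set Ω} (hS : ∀ k, Rp P X (S k) (f k)) :
    Rp P X (condConcat P A S) (fun x => ⋃ k, A.part k ∩ f k x) := by
  have hc := isCond_concat hX A fun k => (hS k).1
  refine ⟨hc, fun x hx => ?_⟩
  obtain ⟨a1, a2, ⟨y, ⟨u, hu, hyu⟩, hxy⟩, a3⟩ := indBase_spec hc x
  choose w hw using fun k => (hS k).1.1.1
  have h1 : ∀ k, ∀ᵐ ω ∂P, ω ∈ A.part k ∩ indBase P (S k) x →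
      ω ∈ indBase P (condConcat P A S) x := by
    intro k
    obtain ⟨c1, c2, ⟨z, hz, hxz⟩, -⟩ := indBase_spec (hS k).1 x
    refine a3 _ ((A.meas k).inter c1) ?_
      ⟨A.concat (Function.update w k z), ⟨_, ?_, EventuallyEq.rfl⟩, ?_⟩
    · filter_upwards [c2] with ω b1 b2
      exact mem_iUnion.2 ⟨k, b2.1, b1 b2.2⟩
    · intro j
      by_cases hj : j = k
      · subst hj; simpa using hz
      · simpa [hj] using hw j
    · filter_upwards [hxz, concat_ae A (Function.update w k z)] with ω b1 b2 b3
      rw [b2 k b3.1, b1 b3.2]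
      simp
  have h2 : ∀ k, ∀ᵐ ω ∂P, ω ∈ indBase P (condConcat P A S) x ∩ A.part k →
      ω ∈ indBase P (S k) x := by
    intro k
    refine (indBase_spec (hS k).1 x).2.2.2 _ (a1.inter (A.meas k)) ?_ ⟨u k, hu k, ?_⟩
    · filter_upwards [a2, disj_ae A] with ω b1 b2 b3
      obtain ⟨j, hj, hj'⟩ := mem_iUnion.1 (b1 b3.1)
      rw [b2 k j b3.2 hj]; exact hj'
    · filter_upwards [hxy, hyu, concat_ae A u] with ω b1 b2 b3 b4
      rw [b1 b4.1, b2, b3 k b4.2]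
  filter_upwards [ae_all_iff.2 h1, ae_all_iff.2 h2, cover_ae A,
    ae_all_iff.2 fun k => (hS k).2 x hx] with ω b1 b2 ⟨k, hk⟩ b4
  constructor
  · intro h
    exact mem_iUnion.2 ⟨k, hk, (b4 k).1 (b2 k ⟨h, hk⟩)⟩
  · intro h
    obtain ⟨j, hj, hj'⟩ := mem_iUnion.1 h
    exact b1 j ⟨hj, (b4 j).2 hj'⟩

/-- membership in a stable collection only depends on the representing function -/
lemma IsStableColl.mem_of_rp {𝒞 : Set (CondRaw Ω E)} (h : IsStableColl P X 𝒞)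
    {S T : CondRaw Ω E} {f g : (Ω → E) → Set Ω} (hS : Rp P X S f) (hT : Rp P X T g)
    (hfg : ∀ x ∈ X, ∀ᵐ ω ∂P, ω ∈ f x ↔ ω ∈ g x) (hmem : S ∈ 𝒞) : T ∈ 𝒞 :=
  h.2.2.1 S hmem T hT.1 ((hS.ceq_iff hT).2 hfg)

lemma isStableDynkin_all (hX : Stable P X) : IsStableDynkin P X {S | IsCond P X S} := by
  refine ⟨⟨⟨_, (rp_top hX).1⟩, fun S h => h, fun S _ T h _ => h,
    fun A S h => isCond_concat hX A h⟩, (rp_top hX).1, fun S h => (rp_compl₀ hX h).1,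
    fun S h _ => (rp_sup₀ hX h).1⟩

lemma isStableDynkin_gen (hX : Stable P X) {ℰ : Set (CondRaw Ω E)} (hℰ : IsStableColl P X ℰ) :
    IsStableDynkin P X (dynkinGen P X ℰ) := by
  refine ⟨⟨?_, ?_, ?_, ?_⟩, ?_, ?_, ?_⟩
  · obtain ⟨S, hS⟩ := hℰ.1
    exact ⟨S, fun 𝒟 h => h.2 hS⟩
  · intro S hS
    exact hS _ ⟨isStableDynkin_all hX, hℰ.2.1⟩
  · intro S hS T hT hST 𝒟 h
    exact h.1.1.2.2.1 S (hS 𝒟 h) T hT hST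
  · intro A S hS 𝒟 h
    exact h.1.1.2.2.2 A S fun k => hS k 𝒟 h
  · intro 𝒟 h
    exact h.1.2.1
  · intro S hS 𝒟 h
    exact h.1.2.2.1 S (hS 𝒟 h)
  · intro S hS hd 𝒟 h
    exact h.1.2.2.2 S (fun k => hS k 𝒟 h) hd

lemma IsStableDynkin.bot_mem (hX : Stable P X) {𝒟 : Set (CondRaw Ω E)}
    (h : IsStableDynkin P X 𝒟) : cbot X ∈ 𝒟 :=
  h.1.mem_of_rp (rp_compl hX (rp_top hX)) (rp_bot hX) (fun x _ => by simp) (h.2.2.1 _ h.2.1)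

/-- relative complements in a Dynkin system -/
lemma IsStableDynkin.inf_compl_mem (hX : Stable P X) {𝒟 : Set (CondRaw Ω E)}
    (h : IsStableDynkin P X 𝒟) {T S : CondRaw Ω E} (hT : T ∈ 𝒟) (hS : IsCond P X S)
    (hTS : cInf₂ P X T S ∈ 𝒟) : cInf₂ P X T (ccompl P X S) ∈ 𝒟 := by
  have rT := rp_self (h.1.2.1 T hT)
  have rS := rp_self hS
  have rTc := rp_compl hX rT
  have rI := rp_inf hX rT rS
  have rB := rp_bot hX
  let W : ℕ → CondRaw Ω E := fun n =>
    if n = 0 then ccompl P X T else if n = 1 then cInf₂ P X T S else cbot X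
  let w : ℕ → (Ω → E) → Set Ω := fun n =>
    if n = 0 then fun x => (indBase P T x)ᶜ else if n = 1 then
      fun x => indBase P T x ∩ indBase P S x else fun _ => ∅
  have rW : ∀ n, Rp P X (W n) (w n) := by
    intro n
    by_cases h0 : n = 0
    · simpa [W, w, h0] using rTc
    · by_cases h1 : n = 1
      · simpa [W, w, h1] using rI
      · simpa [W, w, h0, h1] using rB
  have hW : ∀ n, W n ∈ 𝒟 := by
    intro n
    by_cases h0 : n = 0
    · simpa [W, h0] using h.2.2.1 T hT
    · by_cases h1 : n = 1
      · simpa [W, h1] using hTS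
      · simpa [W, h0, h1] using h.bot_mem hX
  have hsup := h.2.2.2 W hW (by
    intro i j hij
    rw [disjoint_iff hX (rW i) (rW j)]
    intro x hx
    refine ae_of_all _ fun ω => ?_
    simp only [w]
    split_ifs <;> simp_all)
  refine h.1.mem_of_rp (rp_compl hX (rp_sup hX rW)) (rp_inf hX rT (rp_compl hX rS)) ?_
    (h.2.2.1 _ hsup)
  intro x hx
  refine ae_of_all _ fun ω => ?_
  have hU : ω ∈ (⋃ k, w k x) ↔ (ω ∉ indBase P T x ∨ ω ∈ indBase P T x ∩ indBase P S x) := by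
    rw [mem_iUnion]
    constructor
    · rintro ⟨k, hk⟩
      simp only [w] at hk
      split_ifs at hk
      · exact Or.inl hk
      · exact Or.inr hk
      · exact hk.elim
    · rintro (hk | hk)
      · exact ⟨0, by simpa [w] using hk⟩
      · exact ⟨1, by simpa [w] using hk⟩
  rw [mem_compl_iff, hU]
  simp only [mem_inter_iff, mem_compl_iff]
  tauto

lemma isStableDynkin_sub (hX : Stable P X) {𝒟 : Set (CondRaw Ω E)}
    (h : IsStableDynkin P X 𝒟) {T : CondRaw Ω E} (hT : T ∈ 𝒟) :
    IsStableDynkin P X {S | S ∈ 𝒟 ∧ cInf₂ P X T S ∈ 𝒟} := by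
  have rT := rp_self (h.1.2.1 T hT)
  have htop : ctop X ∈ {S | S ∈ 𝒟 ∧ cInf₂ P X T S ∈ 𝒟} :=
    ⟨h.2.1, h.1.mem_of_rp rT (rp_inf hX rT (rp_top hX)) (fun x _ => by simp) hT⟩
  refine ⟨⟨⟨_, htop⟩, fun S hS => h.1.2.1 S hS.1, ?_, ?_⟩, htop, ?_, ?_⟩
  · rintro S ⟨hS, hS'⟩ U hU hSU
    refine ⟨h.1.2.2.1 S hS U hU hSU, ?_⟩
    have rS := rp_self (h.1.2.1 S hS)
    have hh := (rS.ceq_iff (rp_self hU)).1 hSU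
    refine h.1.mem_of_rp (rp_inf hX rT rS) (rp_inf hX rT (rp_self hU)) ?_ hS'
    intro x hx
    filter_upwards [hh x hx] with ω b using and_congr Iff.rfl b
  · intro A S hS
    refine ⟨h.1.2.2.2 A S fun k => (hS k).1, ?_⟩
    have rS := fun k => rp_self (h.1.2.1 (S k) (hS k).1)
    refine h.1.mem_of_rp (rp_concat hX A fun k => rp_inf hX rT (rS k))
      (rp_inf hX rT (rp_concat hX A rS)) ?_ (h.1.2.2.2 A _ fun k => (hS k).2)
    intro x hx
    refine ae_of_all _ fun ω => ?_
    simp only [mem_iUnion, mem_inter_iff]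
    constructor
    · rintro ⟨k, a, b, c⟩; exact ⟨b, k, a, c⟩
    · rintro ⟨b, k, a, c⟩; exact ⟨k, a, b, c⟩
  · rintro S ⟨hS, hS'⟩
    exact ⟨h.2.2.1 S hS, h.inf_compl_mem hX hT (h.1.2.1 S hS) hS'⟩
  · intro S hS hd
    refine ⟨h.2.2.2 S (fun k => (hS k).1) hd, ?_⟩
    have rS := fun k => rp_self (h.1.2.1 (S k) (hS k).1)
    have rI := fun k => rp_inf hX rT (rS k)
    refine h.1.mem_of_rp (rp_sup hX rI) (rp_inf hX rT (rp_sup hX rS)) ?_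
      (h.2.2.2 _ (fun k => (hS k).2) ?_)
    · intro x hx
      refine ae_of_all _ fun ω => ?_
      simp
    · intro i j hij
      rw [disjoint_iff hX (rI i) (rI j)]
      intro x hx
      filter_upwards [(disjoint_iff hX (rS i) (rS j)).1 (hd i j hij) x hx] with ω b c d
        using b c.2 d.2

lemma IsStableDynkin.isStableSigma (hX : Stable P X) {𝒟 : Set (CondRaw Ω E)}
    (h : IsStableDynkin P X 𝒟) (hI : ∀ S ∈ 𝒟, ∀ T ∈ 𝒟, cInf₂ P X S T ∈ 𝒟) :
    IsStableSigma P X 𝒟 := by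
  refine ⟨h.1, h.2.1, h.2.2.1, ?_⟩
  intro S hS
  have rS := fun k => rp_self (h.1.2.1 (S k) (hS k))
  -- `U n` represents the complement of the union of the first `n` sets
  let U : ℕ → CondRaw Ω E := fun n =>
    Nat.rec (ctop X) (fun k V => cInf₂ P X V (ccompl P X (S k))) n
  have hU : ∀ n, U n ∈ 𝒟 := by
    intro n
    induction n with
    | zero => exact h.2.1
    | succ n ih => exact hI _ ih _ (h.2.2.1 _ (hS n))
  have rU : ∀ n, Rp P X (U n) (fun x => {ω | ∀ j < n, ω ∉ indBase P (S j) x}) := by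
    intro n
    induction n with
    | zero => exact (rp_top hX).congr fun x _ => by simp
    | succ n ih =>
      refine (rp_inf hX ih (rp_compl hX (rS n))).congr fun x _ => ae_of_all _ fun ω => ?_
      simp only [mem_inter_iff, mem_setOf_eq, mem_compl_iff]
      constructor
      · rintro ⟨a, b⟩ j hj
        rcases Nat.lt_succ_iff_lt_or_eq.1 hj with hj | rfl
        · exact a j hj
        · exact b
      · intro a
        exact ⟨fun j hj => a j (by omega), a n (by omega)⟩
  have rW := fun n => rp_inf hX (rS n) (rU n)
  refine h.1.mem_of_rp (rp_sup hX rW) (rp_sup hX rS) ?_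
    (h.2.2.2 _ (fun n => hI _ (hS n) _ (hU n)) ?_)
  · intro x hx
    refine ae_of_all _ fun ω => ?_
    simp only [mem_iUnion, mem_inter_iff, mem_setOf_eq]
    constructor
    · rintro ⟨k, a, -⟩; exact ⟨k, a⟩
    · intro hex
      classical
      exact ⟨Nat.find hex, Nat.find_spec hex, fun j hj => Nat.find_min hex hj⟩
  · intro i j hij
    rw [disjoint_iff hX (rW i) (rW j)]
    intro x hx
    refine ae_of_all _ fun ω a b => ?_
    rcases lt_or_gt_of_ne hij with hlt | hlt
    · exact b.2 i hlt a.1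
    · exact a.2 j hlt b.1

end aux

/-- **Theorem 3.5 (conditional π-λ theorem).**  If `ℰ` is a stable collection in the
conditional power set of a stable set `X` which is closed under finite conditional
intersections, then the stable σ-algebra generated by `ℰ` coincides with the stable
Dynkin system generated by `ℰ`. -/
theorem sigmaGen_eq_dynkinGen
    {Ω E : Type*} {mΩ : MeasurableSpace Ω} (P : @Measure Ω mΩ)
    [IsProbabilityMeasure P] (X : Set (Ω → E)) (hX : Stable P X)
    (ℰ : Set (CondRaw Ω E)) (hℰ : IsStableColl P X ℰ)
    (hπ : ∀ S ∈ ℰ, ∀ T ∈ ℰ, cInf₂ P X S T ∈ ℰ) :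
    sigmaGen P X ℰ = dynkinGen P X ℰ := by
  have hD := isStableDynkin_gen hX hℰ
  have hsub : ℰ ⊆ dynkinGen P X ℰ := fun S hS 𝒟 h => h.2 hS
  apply Subset.antisymm
  · have key1 : ∀ S ∈ ℰ, ∀ T ∈ dynkinGen P X ℰ, cInf₂ P X S T ∈ dynkinGen P X ℰ := by
      intro S hS T hT
      exact (hT _ ⟨isStableDynkin_sub hX hD (hsub hS),
        fun T' hT' => ⟨hsub hT', hsub (hπ S hS T' hT')⟩⟩).2
    have key2 : ∀ S ∈ dynkinGen P X ℰ, ∀ T ∈ dynkinGen P X ℰ,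
        cInf₂ P X S T ∈ dynkinGen P X ℰ := by
      intro S hS T hT
      refine (hT _ ⟨isStableDynkin_sub hX hD hS, fun T' hT' => ⟨hsub hT', ?_⟩⟩).2
      have h1 := key1 T' hT' S hS
      have : cInf₂ P X S T' = cInf₂ P X T' S := by
        unfold cInf₂; rw [Set.pair_comm]
      rw [this]; exact h1
    exact fun S hS => hS _ ⟨hD.isStableSigma hX key2, hsub⟩
  · intro S hS 𝒳 h
    exact hS 𝒳 ⟨⟨h.1.1, h.1.2.1, h.1.2.2.1, fun T hT _ => h.1.2.2.2 T hT⟩, h.2⟩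

end CondMT
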